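/- Expression soundness and totality: If Γ ⊢ e : τ and the store σ is well-typed for Γ (σ ⊨ Γ), then there exists a value v such that σ ⊢ e ⇓ v and v has type τ (v is an integer if τ = Int, and a boolean if τ = Bool). -/

import Mathlib

inductive Ty : Type
  | int
  | bool
deriving DecidableEq

inductive Expr : Type
  | int (n : ℤ)
  | tt
  | ff
  | var (x : String)
  | plus (e₁ e₂ : Expr)
  | isOp (e₁ e₂ : Expr)

inductive Val : Type
  | int (n : ℤ)
  | bool (b : Bool)

/-- A value has a type: integer values have type `Int`, booleans have type `Bool`. -/
inductive ValHasTy : Val → Ty → Prop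
  | int (n : ℤ) : ValHasTy (.int n) .int
  | bool (b : Bool) : ValHasTy (.bool b) .bool

/-- Typing contexts: finite maps from variables to types. -/
def Ctx : Type := String → Option Ty

/-- Stores: partial maps from variables to values. -/
def Store : Type := String → Option Val

/-- Expression typing `Γ ⊢ e : τ`. -/
inductive HasTy : Ctx → Expr → Ty → Prop
  | int (Γ : Ctx) (n : ℤ) : HasTy Γ (.int n) .int
  | tt (Γ : Ctx) : HasTy Γ .tt .bool
  | ff (Γ : Ctx) : HasTy Γ .ff .bool
  | var (Γ : Ctx) (x : String) (τ : Ty) : Γ x = some τ → HasTy Γ (.var x) τ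
  | plus (Γ : Ctx) (e₁ e₂ : Expr) :
      HasTy Γ e₁ .int → HasTy Γ e₂ .int → HasTy Γ (.plus e₁ e₂) .int
  | rel (Γ : Ctx) (e₁ e₂ : Expr) (τ : Ty) :
      HasTy Γ e₁ τ → HasTy Γ e₂ τ → HasTy Γ (.isOp e₁ e₂) .bool

inductive Stmt : Type
  | skip
  | letBe (x : String) (e : Expr)
  | ifThenElse (e : Expr) (s₁ s₂ : Stmt)
  | print (e : Expr)
  | seq (s₁ s₂ : Stmt)

/-- Statement typing `Γ ⊢ S ⇒ Γ'`. -/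
inductive StmtTy : Ctx → Stmt → Ctx → Prop
  | skip (Γ : Ctx) : StmtTy Γ .skip Γ
  | letBe (Γ : Ctx) (x : String) (e : Expr) (τ : Ty) :
      HasTy Γ e τ → StmtTy Γ (.letBe x e) (fun y => if y = x then some τ else Γ y)
  | ifThenElse (Γ : Ctx) (e : Expr) (s₁ s₂ : Stmt) :
      HasTy Γ e .bool → StmtTy Γ s₁ Γ → StmtTy Γ s₂ Γ →
      StmtTy Γ (.ifThenElse e s₁ s₂) Γ
  | print (Γ : Ctx) (e : Expr) (τ : Ty) : HasTy Γ e τ → StmtTy Γ (.print e) Γ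
  | seq (Γ Γ' Γ'' : Ctx) (s₁ s₂ : Stmt) :
      StmtTy Γ s₁ Γ' → StmtTy Γ' s₂ Γ'' → StmtTy Γ (.seq s₁ s₂) Γ''

/-- Big-step expression evaluation `σ ⊢ e ⇓ v`. -/
inductive Eval : Store → Expr → Val → Prop
  | int (σ : Store) (n : ℤ) : Eval σ (.int n) (.int n)
  | tt (σ : Store) : Eval σ .tt (.bool true)
  | ff (σ : Store) : Eval σ .ff (.bool false)
  | var (σ : Store) (x : String) (v : Val) : σ x = some v → Eval σ (.var x) v
  | plus (σ : Store) (e₁ e₂ : Expr) (n₁ n₂ : ℤ) :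
      Eval σ e₁ (.int n₁) → Eval σ e₂ (.int n₂) →
      Eval σ (.plus e₁ e₂) (.int (n₁ + n₂))
  | isInt (σ : Store) (e₁ e₂ : Expr) (n₁ n₂ : ℤ) :
      Eval σ e₁ (.int n₁) → Eval σ e₂ (.int n₂) →
      Eval σ (.isOp e₁ e₂) (.bool (n₁ == n₂))
  | isBool (σ : Store) (e₁ e₂ : Expr) (b₁ b₂ : Bool) :
      Eval σ e₁ (.bool b₁) → Eval σ e₂ (.bool b₂) →
      Eval σ (.isOp e₁ e₂) (.bool (b₁ == b₂))

/-- Small-step statement semantics `⟨S, σ⟩ ↝ ⟨S', σ'⟩`. -/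
inductive Step : Stmt → Store → Stmt → Store → Prop
  | letBe (σ : Store) (x : String) (e : Expr) (v : Val) :
      Eval σ e v → Step (.letBe x e) σ .skip (fun y => if y = x then some v else σ y)
  | ifTrue (σ : Store) (e : Expr) (s₁ s₂ : Stmt) :
      Eval σ e (.bool true) → Step (.ifThenElse e s₁ s₂) σ s₁ σ
  | ifFalse (σ : Store) (e : Expr) (s₁ s₂ : Stmt) :
      Eval σ e (.bool false) → Step (.ifThenElse e s₁ s₂) σ s₂ σ
  | print (σ : Store) (e : Expr) (v : Val) : Eval σ e v → Step (.print e) σ .skip σ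
  | seqSkip (σ : Store) (s₂ : Stmt) : Step (.seq .skip s₂) σ s₂ σ
  | seqStep (σ σ' : Store) (s₁ s₁' s₂ : Stmt) :
      Step s₁ σ s₁' σ' → Step (.seq s₁ s₂) σ (.seq s₁' s₂) σ'

/-- `σ ⊨ Γ`: the store is well-typed for the context. -/
def StoreTy (σ : Store) (Γ : Ctx) : Prop :=
  ∀ x τ, Γ x = some τ → ∃ v, σ x = some v ∧ ValHasTy v τ

/-- The empty typing context. -/
def emptyCtx : Ctx := fun _ => none

/-- **Expression soundness and totality**: a well-typed expression evaluates,
in any store well-typed for the context, to a value of its type. -/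
theorem expr_soundness (Γ : Ctx) (e : Expr) (τ : Ty) (σ : Store)
    (hty : HasTy Γ e τ) (hσ : StoreTy σ Γ) :
    ∃ v : Val, Eval σ e v ∧ ValHasTy v τ := by
  induction hty with
  | int n => exact ⟨_, .int _ n, .int n⟩
  | tt => exact ⟨_, .tt _, .bool _⟩
  | ff => exact ⟨_, .ff _, .bool _⟩
  | var x τ h =>
    obtain ⟨v, hv, hvt⟩ := hσ x τ h
    exact ⟨v, .var _ _ _ hv, hvt⟩
  | plus e₁ e₂ _ _ ih₁ ih₂ =>
    obtain ⟨v₁, h₁, t₁⟩ := ih₁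
    obtain ⟨v₂, h₂, t₂⟩ := ih₂
    cases t₁
    cases t₂
    exact ⟨_, .plus _ _ _ _ _ h₁ h₂, .int _⟩
  | rel e₁ e₂ τ _ _ ih₁ ih₂ =>
    obtain ⟨v₁, h₁, t₁⟩ := ih₁
    obtain ⟨v₂, h₂, t₂⟩ := ih₂
    cases t₁ with
    | int n =>
      cases t₂
      exact ⟨_, .isInt _ _ _ _ _ h₁ h₂, .bool _⟩
    | bool b =>
      cases t₂
      exact ⟨_, .isBool _ _ _ _ _ h₁ h₂, .bool _⟩
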